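/- arXiv:1111.4047 — 2 statements merged into one kernel-verified Lean document; each statement's English description precedes it below -/
import Mathlib

section
/- (Submatrix MacMahon Master Theorem) Let the (n'+n)×(n'+n) matrix have block form [[B, U],[V, A]]. Then Σ_{r} (1/r!) perm_β [[B, U(n^r)],[V(n^r), A(n^r,n^r)]] = perm_β(B̃) / det(I-A)^β, where B̃ = B + U(I-A)^{-1}V, the sum is over all n-tuples r of non-negative integers, and (I-A)^{-1} = Σ_{k≥0} A^k. -/
open scoped Classical

noncomputable section

/-- Number of cycles of a permutation, counting fixed points as 1-cycles. -/
def cycleCount {α : Type*} [Fintype α] [DecidableEq α] (π : Equiv.Perm α) : ℕ :=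
  (Finset.univ.filter fun x => π x = x).card + π.cycleType.card

/-- The β-extended permanent of a matrix. -/
def permB {α : Type*} [Fintype α] [DecidableEq α] {R : Type*} [CommRing R]
    (β : R) (M : Matrix α α R) : R :=
  ∑ π : Equiv.Perm α, β ^ cycleCount π * ∏ i, M i (π i)

/-- `A(n^r, n^r)`: index `i` repeated `r i` times. -/
def repA {n : ℕ} {R : Type*} (A : Matrix (Fin n) (Fin n) R) (r : Fin n → ℕ) :
    Matrix ((i : Fin n) × Fin (r i)) ((i : Fin n) × Fin (r i)) R :=
  fun k l => A k.1 l.1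

/-- `U(n^r)`: columns of `U` repeated according to `r`. -/
def repU {n' n : ℕ} {R : Type*} (U : Matrix (Fin n') (Fin n) R) (r : Fin n → ℕ) :
    Matrix (Fin n') ((i : Fin n) × Fin (r i)) R :=
  fun i' k => U i' k.1

/-- `V(n^r)`: rows of `V` repeated according to `r`. -/
def repV {n' n : ℕ} {R : Type*} (V : Matrix (Fin n) (Fin n') R) (r : Fin n → ℕ) :
    Matrix ((i : Fin n) × Fin (r i)) (Fin n') R :=
  fun k j' => V k.1 j'

open Equiv Equiv.Perm in
lemma cycleCount_eq_card {α : Type*} [Fintype α] [DecidableEq α] (π : Equiv.Perm α) :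
    cycleCount π = Nat.card (Quotient (SameCycle.setoid π)) := by
  have e : Quotient (SameCycle.setoid π) ≃ {x // π x = x} ⊕ π.cycleFactorsFinset := by
    symm
    refine Equiv.ofBijective
      (Sum.elim (fun x => Quotient.mk _ x.1) (fun c => Quotient.mk _ 
        (mem_cycleFactorsFinset_iff.1 c.2).1.nonempty_support.choose)) ⟨?_, ?_⟩
    · have hc : ∀ c : π.cycleFactorsFinset,
          (mem_cycleFactorsFinset_iff.1 c.2).1.nonempty_support.choose ∈ c.1.support :=
        fun c => (mem_cycleFactorsFinset_iff.1 c.2).1.nonempty_support.choose_spec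
      have hc2 : ∀ c : π.cycleFactorsFinset,
          π ((mem_cycleFactorsFinset_iff.1 c.2).1.nonempty_support.choose) ≠ 
          (mem_cycleFactorsFinset_iff.1 c.2).1.nonempty_support.choose := 
        fun c => mem_support.1 (mem_cycleFactorsFinset_support_le c.2 (hc c))
      rintro (⟨x, hx⟩ | c) (⟨y, hy⟩ | d) h
      · have h' : SameCycle π x y := Quotient.exact h
        have := h'.eq_of_left hx
        simp [this]
      · exfalso
        have h' : SameCycle π x _ := Quotient.exact h
        have := h'.apply_eq_self_iff.1 hx
        exact hc2 d this
      · exfalso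
        have h' : SameCycle π _ y := Quotient.exact h
        have := h'.apply_eq_self_iff.2 hy
        exact hc2 c this
      · have h' : SameCycle π _ _ := Quotient.exact h
        have h1 := h'.cycleOf_eq
        rw [← cycle_is_cycleOf (hc c) c.2, ← cycle_is_cycleOf (hc d) d.2] at h1
        rw [Subtype.ext h1]
    · intro q
      induction q using Quotient.inductionOn with
      | h x =>
      by_cases hx : π x = x
      · exact ⟨Sum.inl ⟨x, hx⟩, rfl⟩
      · have hm : cycleOf π x ∈ π.cycleFactorsFinset :=
          cycleOf_mem_cycleFactorsFinset_iff.2 (mem_support.2 hx)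
        refine ⟨Sum.inr ⟨_, hm⟩, ?_⟩
        apply Quotient.sound
        have := (mem_cycleFactorsFinset_iff.1 hm).1.nonempty_support.choose_spec
        exact (mem_support_cycleOf_iff.1 this).1.symm
  rw [Nat.card_congr e, Nat.card_sum, cycleCount, cycleType_def]
  simp [Fintype.card_subtype]

lemma cycleCount_permCongr {α γ : Type*} [Fintype α] [DecidableEq α] [Fintype γ] [DecidableEq γ]
    (e : α ≃ γ) (π : Equiv.Perm α) : cycleCount (e.permCongr π) = cycleCount π := by
  rw [cycleCount_eq_card, cycleCount_eq_card]
  symm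
  refine Nat.card_congr (Quotient.congr e ?_)
  intro x y
  show Equiv.Perm.SameCycle _ _ _ ↔ Equiv.Perm.SameCycle _ _ _
  have h : ∀ (i : ℤ), (e.permCongr π ^ i) = e.permCongr (π ^ i) := fun i =>
    (map_zpow (e.permCongrHom) π i).symm
  simp only [Equiv.Perm.SameCycle, h]
  simp

lemma permB_submatrix {α γ : Type*} [Fintype α] [DecidableEq α] [Fintype γ] [DecidableEq γ]
    {R : Type*} [CommRing R] (β : R) (e : α ≃ γ) (M : Matrix γ γ R) :
    permB β (M.submatrix e e) = permB β M := by
  unfold permB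
  refine Fintype.sum_equiv e.permCongr _ _ fun π => ?_
  rw [cycleCount_permCongr]
  congr 1
  refine Fintype.prod_equiv e _ _ fun i => ?_
  simp

lemma sameCycle_map_of_step {α γ : Type*} (π : Equiv.Perm α) (σ : Equiv.Perm γ) (f : α → γ)
    (h : ∀ x, σ.SameCycle (f x) (f (π x))) {x y : α} (hxy : π.SameCycle x y) :
    σ.SameCycle (f x) (f y) := by
  obtain ⟨i, rfl⟩ := hxy
  induction i with
  | zero => simp; rfl
  | succ n ih =>
    rw [add_comm, zpow_add, zpow_one]
    exact ih.trans (h _)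
  | pred n ih =>
    refine ih.trans ?_
    have := h ((π ^ (-(n:ℤ) - 1)) x)
    rw [← Equiv.Perm.mul_apply, ← zpow_one_add] at this
    simpa using this.symm

lemma cycleCount_option_none {α : Type*} [Fintype α] [DecidableEq α] (σ : Equiv.Perm α) :
    cycleCount (Equiv.Perm.decomposeOption.symm (none, σ)) = cycleCount σ + 1 := by
  have h2 : ∀ x, Equiv.Perm.decomposeOption.symm (none, σ) (some x) = some (σ x) := by simp
  have h3 : Equiv.Perm.decomposeOption.symm (none, σ) none = none := by simp
  generalize Equiv.Perm.decomposeOption.symm (none, σ) = π at h2 h3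
  rw [cycleCount_eq_card, cycleCount_eq_card, ← Finite.card_option]
  symm
  have hs : ∀ x y, σ.SameCycle x y → π.SameCycle (some x) (some y) := fun x y h =>
    sameCycle_map_of_step σ π some (fun x => by rw [← h2]; exact ⟨1, by simp⟩) h
  have hn : ∀ y, π.SameCycle none y → y = none := fun y h => (h.eq_of_left h3).symm
  refine Nat.card_congr (Equiv.ofBijective (fun q => q.elim (Quotient.mk _ none)
    (fun q => Quotient.map some hs q)) ⟨?_, ?_⟩)
  · intro p q h
    cases p with
    | none => 
      cases q with
      | none => rfl
      | some q =>
        induction q using Quotient.inductionOn with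
        | h x => exact absurd (hn _ (Quotient.exact h)) (by simp)
    | some p => 
      induction p using Quotient.inductionOn with
      | h x =>
      cases q with
      | none => exact absurd (hn _ (Quotient.exact h.symm)) (by simp)
      | some q =>
        induction q using Quotient.inductionOn with
        | h y =>
        congr 1
        apply Quotient.sound
        have h' : π.SameCycle (some x) (some y) := Quotient.exact h
        refine sameCycle_map_of_step π σ (fun z => z.getD x) ?_ h'
        intro z
        cases z with
        | none => rw [h3]
        | some z => rw [h2]; exact ⟨1, by simp⟩
  · intro q
    induction q using Quotient.inductionOn with
    | h z => 
    cases z with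
    | none => exact ⟨none, rfl⟩
    | some z => exact ⟨some (Quotient.mk _ z), rfl⟩

lemma cycleCount_option_some {α : Type*} [Fintype α] [DecidableEq α] (σ : Equiv.Perm α) (i : α) :
    cycleCount (Equiv.Perm.decomposeOption.symm (some i, σ)) = cycleCount σ := by
  have h2 : ∀ x, Equiv.Perm.decomposeOption.symm (some i, σ) (some x) = 
      if σ x = i then none else some (σ x) := by 
    intro x; split_ifs with h <;> simp [h, Equiv.swap_apply_def]
  have h3 : Equiv.Perm.decomposeOption.symm (some i, σ) none = some i := by simp
  generalize Equiv.Perm.decomposeOption.symm (some i, σ) = π at h2 h3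
  rw [cycleCount_eq_card, cycleCount_eq_card]
  symm
  have h1 : ∀ z, π.SameCycle z (π z) := fun z => ⟨1, by simp⟩
  have hs : ∀ x y, σ.SameCycle x y → π.SameCycle (some x) (some y) := fun x y h =>
    sameCycle_map_of_step σ π some (fun x => by 
      by_cases hx : σ x = i
      · rw [hx, ← h3]
        have := h1 (some x)
        rw [h2, if_pos hx] at this
        exact this.trans (h1 _)
      · have := h1 (some x)
        rwa [h2, if_neg hx] at this) h
  refine Nat.card_congr (Equiv.ofBijective (fun q => Quotient.map some hs q) ⟨?_, ?_⟩)
  · intro p q h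
    induction p using Quotient.inductionOn with
    | h x =>
    induction q using Quotient.inductionOn with
    | h y =>
    apply Quotient.sound
    have h' : π.SameCycle (some x) (some y) := Quotient.exact h
    refine sameCycle_map_of_step π σ (fun z => z.getD i) ?_ h'
    intro z
    cases z with
    | none => rw [h3]; exact Equiv.Perm.SameCycle.refl _ _
    | some z => 
      rw [h2]
      have : σ.SameCycle z (σ z) := ⟨1, by simp⟩
      split_ifs with hz
      · rw [hz] at this; exact this
      · exact this
  · intro q
    induction q using Quotient.inductionOn with
    | h z => 
    cases z with
    | none => 
      refine ⟨Quotient.mk _ i, Quotient.sound ?_⟩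
      have := h1 none
      rw [h3] at this
      exact this.symm
    | some z => exact ⟨(Quotient.mk _ z), rfl⟩

/-- Inserting one more index. -/
lemma permB_option {α : Type*} [Fintype α] [DecidableEq α] {R : Type*} [CommRing R]
    (β : R) (M : Matrix (Option α) (Option α) R) :
    permB β M = β * M none none * permB β (M.submatrix some some) +
      ∑ i, permB β ((M.submatrix some some).updateRow i 
        (fun j => M (some i) none * M none (some j))) := by
  have h1 : permB β M = ∑ i : Option α, ∑ σ : Equiv.Perm α,
      β ^ cycleCount (Equiv.Perm.decomposeOption.symm (i, σ)) * 
        ∏ x, M x (Equiv.Perm.decomposeOption.symm (i, σ) x) := by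
    rw [← Fintype.sum_prod_type']
    exact (Fintype.sum_equiv Equiv.Perm.decomposeOption.symm _ _ fun _ => rfl).symm
  rw [h1, Fintype.sum_option]
  congr 1
  · simp only [permB, Finset.mul_sum]
    refine Finset.sum_congr rfl fun σ _ => ?_
    rw [cycleCount_option_none, Fintype.prod_option]
    simp
    ring
  · -- swap the roles: sum over images versus sum over preimages
    have h2 : ∀ (i : α) (σ : Equiv.Perm α),
        ∏ x, M x (Equiv.Perm.decomposeOption.symm (some i, σ) x) =
        ∏ x, ((M.submatrix some some).updateRow (σ⁻¹ i) 
          (fun j => M (some (σ⁻¹ i)) none * M none (some j))) x (σ x) := by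
      intro i σ
      rw [Fintype.prod_option, ← Finset.mul_prod_erase _ _ (Finset.mem_univ (σ⁻¹ i)),
        ← Finset.mul_prod_erase _ _ (Finset.mem_univ (σ⁻¹ i))]
      have : ∏ x ∈ Finset.univ.erase (σ⁻¹ i), 
          M (some x) (Equiv.Perm.decomposeOption.symm (some i, σ) (some x)) =
          ∏ x ∈ Finset.univ.erase (σ⁻¹ i), ((M.submatrix some some).updateRow (σ⁻¹ i) 
          (fun j => M (some (σ⁻¹ i)) none * M none (some j))) x (σ x) := by
        refine Finset.prod_congr rfl fun x hx => ?_
        have hx' : x ≠ σ⁻¹ i := (Finset.mem_erase.1 hx).1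
        have hx2 : σ x ≠ i := fun h => hx' (by rw [← h]; simp)
        rw [Matrix.updateRow_ne hx']
        simp [Equiv.swap_apply_def, hx2]
      rw [this]
      simp
      ring
    simp only [permB, cycleCount_option_some, h2]
    rw [Finset.sum_comm, Finset.sum_comm (s := Finset.univ (α := α))]
    refine Finset.sum_congr rfl fun σ _ => ?_
    exact Fintype.sum_equiv σ⁻¹ _ _ fun i => rfl

/-- The matrix with one extra symbol repeated `r` times. -/
def blk {γ : Type*} {R : Type*} (B : Matrix γ γ R) (u v : γ → R) (a : R) (r : ℕ) :
    Matrix (γ ⊕ Fin r) (γ ⊕ Fin r) R :=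
  Matrix.fromBlocks B (fun i _ => u i) (fun _ j => v j) (fun _ _ => a)

section
variable {γ : Type*} {R : Type*} (B : Matrix γ γ R) (u v : γ → R) (a : R) (r : ℕ)
lemma blk_ll (i j : γ) : blk B u v a r (Sum.inl i) (Sum.inl j) = B i j := rfl
lemma blk_lr (i : γ) (j : Fin r) : blk B u v a r (Sum.inl i) (Sum.inr j) = u i := rfl
lemma blk_rl (i : Fin r) (j : γ) : blk B u v a r (Sum.inr i) (Sum.inl j) = v j := rfl
lemma blk_rr (i j : Fin r) : blk B u v a r (Sum.inr i) (Sum.inr j) = a := rfl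
end

lemma permB_updateRow_smul {α : Type*} [Fintype α] [DecidableEq α] {R : Type*} [CommRing R]
    (β : R) (M : Matrix α α R) (i : α) (c : R) :
    permB β (M.updateRow i (c • M i)) = c * permB β M := by
  simp only [permB, Finset.mul_sum]
  refine Finset.sum_congr rfl fun π _ => ?_
  rw [← Finset.mul_prod_erase _ _ (Finset.mem_univ i),
    ← Finset.mul_prod_erase _ (fun i => M i (π i)) (Finset.mem_univ i)]
  rw [Finset.prod_congr rfl (g := fun x => M x (π x)) (fun x hx => by
    rw [Matrix.updateRow_ne (Finset.mem_erase.1 hx).1])]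
  simp
  ring

/-- `Option (γ ⊕ Fin r) ≃ γ ⊕ Fin (r+1)`. -/
def optSumEquiv (γ : Type*) (r : ℕ) : Option (γ ⊕ Fin r) ≃ γ ⊕ Fin (r + 1) where
  toFun z := z.elim (Sum.inr 0) (Sum.elim Sum.inl (fun k => Sum.inr k.succ))
  invFun := Sum.elim (fun i => some (Sum.inl i)) 
    (Fin.cases none (fun k => some (Sum.inr k)))
  left_inv := by rintro (_ | _ | _) <;> simp
  right_inv := by
    rintro (_ | k)
    · simp
    · cases k using Fin.cases <;> simp

lemma permB_blk_succ {γ : Type*} [Fintype γ] [DecidableEq γ] {R : Type*} [CommRing R]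
    (β : R) (B : Matrix γ γ R) (u v : γ → R) (a : R) (r : ℕ) :
    permB β (blk B u v a (r + 1)) = (β + r) * a * permB β (blk B u v a r) +
      ∑ i, permB β (blk (B.updateRow i (u i • v)) (Function.update u i (u i * a)) v a r) := by
  rw [← permB_submatrix β (optSumEquiv γ r), permB_option, Fintype.sum_sum_type]
  have h0 : ((blk B u v a (r + 1)).submatrix (optSumEquiv γ r) (optSumEquiv γ r)).submatrix 
      some some = blk B u v a r := by
    ext x y
    rcases x with x | x <;> rcases y with y | y <;> rfl
  rw [h0]
  have h1 : ∀ k : Fin r, permB β ((blk B u v a r).updateRow (Sum.inr k) (fun j =>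
      (blk B u v a (r + 1)).submatrix (optSumEquiv γ r) (optSumEquiv γ r) (some (Sum.inr k)) none *
      (blk B u v a (r + 1)).submatrix (optSumEquiv γ r) (optSumEquiv γ r) none (some j))) = 
      a * permB β (blk B u v a r) := by
    intro k
    rw [← permB_updateRow_smul β _ (Sum.inr k) a]
    congr 2
    funext j
    rcases j with j | j <;> rfl
  have h2 : ∀ i : γ, ((blk B u v a r).updateRow (Sum.inl i) (fun j =>
      (blk B u v a (r + 1)).submatrix (optSumEquiv γ r) (optSumEquiv γ r) (some (Sum.inl i)) none *
      (blk B u v a (r + 1)).submatrix (optSumEquiv γ r) (optSumEquiv γ r) none (some j))) = 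
      blk (B.updateRow i (u i • v)) (Function.update u i (u i * a)) v a r := by
    intro i
    ext x y
    rcases x with x | x
    · by_cases hx : x = i
      · subst hx
        rcases y with y | y <;> simp [blk_ll, blk_lr, blk_rl, blk_rr, optSumEquiv]
      · have : (Sum.inl x : γ ⊕ Fin r) ≠ Sum.inl i := by simpa using hx
        rw [Matrix.updateRow_ne this]
        rcases y with y | y <;> simp [blk_ll, blk_lr, blk_rl, blk_rr, hx]
    · rw [Matrix.updateRow_ne (by simp)]
      rcases y with y | y <;> simp [blk_ll, blk_lr, blk_rl, blk_rr]
  simp only [h1, h2]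
  simp [blk_ll, blk_lr, blk_rl, blk_rr, optSumEquiv]
  ring

/-- Negative binomial coefficients. -/
def nb (a b : ℝ) (j : ℕ) : ℝ := (∏ l ∈ Finset.range j, (b + l)) * a ^ j / j.factorial

lemma nb_succ (a b : ℝ) (j : ℕ) : (j + 1 : ℝ) * nb a b (j + 1) = (b + j) * a * nb a b j := by
  unfold nb
  rw [Finset.prod_range_succ, Nat.factorial_succ]
  have := Nat.factorial_ne_zero j
  have h1 : (j.factorial : ℝ) ≠ 0 := by exact_mod_cast this
  have h2 : (j + 1 : ℝ) ≠ 0 := by positivity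
  push_cast
  field_simp
  ring

lemma nb_pascal (a b : ℝ) (j : ℕ) : nb a (b + 1) (j + 1) = nb a b (j + 1) + a * nb a (b + 1) j := by
  unfold nb
  rw [Finset.prod_range_succ, Finset.prod_range_succ' (fun l : ℕ => b + (l : ℝ)), Nat.factorial_succ]
  have := Nat.factorial_ne_zero j
  have h1 : (j.factorial : ℝ) ≠ 0 := by exact_mod_cast this
  have h2 : (j + 1 : ℝ) ≠ 0 := by positivity
  have h3 : ∏ k ∈ Finset.range j, (b + ((k + 1 : ℕ) : ℝ)) = ∏ k ∈ Finset.range j, (b + 1 + (k : ℝ)) := by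
    refine Finset.prod_congr rfl fun k _ => ?_
    push_cast; ring
  rw [h3]
  push_cast
  field_simp
  ring

lemma hasSum_nb (a b : ℝ) (ha : |a| < 1) : HasSum (nb a b) ((1 - a) ^ (-b)) := by
  have h := (Real.one_div_one_sub_rpow_hasFPowerSeriesOnBall_zero b).hasSum (y := a)
    (by simpa [enorm_eq_nnnorm, ← NNReal.coe_lt_one] using ha)
  have hpos : 0 ≤ 1 - a := by linarith [(abs_lt.1 ha).2]
  rw [Real.rpow_neg hpos]
  simp only [zero_add, one_div] at h
  convert! h using 1
  funext j
  simp [nb]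
  have h4 : Ring.choose (b + j - 1) j = Ring.multichoose b j := by
    rw [Ring.choose]
    congr 1
    ring
  have h5 := Ring.factorial_nsmul_multichoose_eq_ascPochhammer b j
  have h6 : (ascPochhammer ℕ j).smeval b = ∏ l ∈ Finset.range j, (b + l) := by
    rw [Polynomial.ascPochhammer_smeval_eq_eval]
    clear h4 h5 h
    induction j with
    | zero => simp
    | succ j ih => rw [ascPochhammer_succ_eval, ih, Finset.prod_range_succ]
  rw [h4]
  rw [h6, nsmul_eq_mul] at h5
  have h1 : (j.factorial : ℝ) ≠ 0 := by exact_mod_cast Nat.factorial_ne_zero j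
  rw [← h5]
  field_simp

/-- Shifted coefficients. -/
def dd (a β : ℝ) (t r : ℕ) : ℝ := if t ≤ r then nb a (β + t) (r - t) else 0

lemma dd_succ (a β : ℝ) (t r : ℕ) : (r + 1 : ℝ) * dd a β t (r + 1) =
    (β + r) * a * dd a β t r + t * (a * dd a β t r + dd a β (t - 1) r) := by
  unfold dd
  rcases t with _ | s
  · simpa using nb_succ a β r
  · rcases lt_trichotomy r s with h | h | h
    · rw [if_neg (by omega), if_neg (by omega), if_neg (by omega)]; simp
    · subst h
      simp [nb]
    · obtain ⟨j, rfl⟩ := Nat.exists_eq_add_of_lt h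
      rw [if_pos (by omega), if_pos (by omega), if_pos (by omega)]
      rw [show s + j + 1 + 1 - (s + 1) = j + 1 by omega, show s + j + 1 - (s + 1) = j by omega,
        show s + 1 - 1 = s by omega, show s + j + 1 - s = j + 1 by omega]
      have h1 := nb_succ a (β + (s + 1 : ℕ)) j
      have h2 := nb_pascal a (β + s) j
      push_cast at *
      rw [add_assoc β (s : ℝ) 1] at h2
      linear_combination h1 + (s + 1 : ℝ) * h2

lemma hasSum_dd (a β : ℝ) (t : ℕ) (ha : |a| < 1) : HasSum (dd a β t) ((1 - a) ^ (-(β + t))) := by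
  have h := hasSum_nb a (β + t) ha
  rw [← (add_left_injective t).hasSum_iff]
  · convert! h using 1
    funext j
    simp [dd]
  · intro x hx
    rw [dd, if_neg]
    intro hle
    exact hx ⟨x - t, by simp; omega⟩

/-- Rows in `T` replaced by `u i • v`. -/
def rowT {γ : Type*} [DecidableEq γ] {R : Type*} [CommRing R] (B : Matrix γ γ R) (u v : γ → R)
    (T : Finset γ) : Matrix γ γ R :=
  Matrix.of fun i j => if i ∈ T then u i * v j else B i j

lemma permB_rank_one {γ : Type*} [Fintype γ] [DecidableEq γ] {R : Type*} [CommRing R]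
    (β : R) (B : Matrix γ γ R) (u v : γ → R) (s : R) :
    permB β (B + s • Matrix.vecMulVec u v) = ∑ T : Finset γ, s ^ T.card * permB β (rowT B u v T) := by
  simp only [permB, Finset.mul_sum]
  rw [Finset.sum_comm]
  refine Finset.sum_congr rfl fun π _ => ?_
  have : ∀ i, (B + s • Matrix.vecMulVec u v) i (π i) = s * (u i * v (π i)) + B i (π i) := by
    intro i; simp [Matrix.vecMulVec_apply]; ring
  simp only [this]
  rw [Finset.prod_add, Finset.mul_sum, Finset.powerset_univ]
  refine Finset.sum_congr rfl fun T _ => ?_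
  have h2 : ∏ i, rowT B u v T i (π i) = (∏ i ∈ T, (u i * v (π i))) * ∏ i ∈ Finset.univ \ T, B i (π i) := by
    simp only [rowT, Matrix.of_apply]
    rw [Finset.prod_ite]
    congr 1
    · simp
    · refine Finset.prod_congr ?_ fun _ _ => rfl
      ext; simp
  rw [h2, Finset.prod_mul_distrib]
  simp
  ring

lemma permB_blk {γ : Type*} [Fintype γ] [DecidableEq γ] 
    (β : ℝ) (v : γ → ℝ) (a : ℝ) (r : ℕ) : ∀ (B : Matrix γ γ ℝ) (u : γ → ℝ), 
    (r.factorial : ℝ)⁻¹ * permB β (blk B u v a r) = 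
      ∑ T : Finset γ, permB β (rowT B u v T) * dd a β T.card r := by
  induction r with
  | zero =>
    intro B u
    rw [Finset.sum_eq_single ∅]
    · have h1 : rowT B u v ∅ = B := by ext; simp [rowT]
      rw [h1, ← permB_submatrix β (Equiv.sumEmpty γ (Fin 0)).symm]
      have : (blk B u v a 0).submatrix (Equiv.sumEmpty γ (Fin 0)).symm (Equiv.sumEmpty γ (Fin 0)).symm = B := by
        ext; rfl
      rw [this]
      simp [dd, nb]
    · intro T _ hT
      have : T.card ≠ 0 := by simpa using hT
      rw [dd, if_neg (by omega), mul_zero]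
    · simp
  | succ r ih =>
    intro B u
    have h1 : (r.factorial : ℝ) ≠ 0 := by exact_mod_cast Nat.factorial_ne_zero r
    have h2 : (r + 1 : ℝ) ≠ 0 := by positivity
    apply mul_left_cancel₀ h2
    have e1 : (r + 1 : ℝ) * (((r+1).factorial : ℝ)⁻¹ * permB β (blk B u v a (r+1))) =
       (β + r) * a * ((r.factorial : ℝ)⁻¹ * permB β (blk B u v a r)) +
      ∑ i, (r.factorial : ℝ)⁻¹ * permB β (blk (B.updateRow i (u i • v)) (Function.update u i (u i * a)) v a r) := by
      rw [permB_blk_succ, Nat.factorial_succ, ← Finset.mul_sum]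
      push_cast
      field_simp
    rw [e1]
    simp only [ih]
    have e2 : ∀ i, ∑ T : Finset γ, permB β (rowT (B.updateRow i (u i • v)) 
        (Function.update u i (u i * a)) v T) * dd a β T.card r =
        ∑ T : Finset γ, if i ∈ T then permB β (rowT B u v T) * 
          (a * dd a β T.card r + dd a β (T.card - 1) r) else 0 := by
      intro i
      rw [← Finset.sum_filter, ← Finset.sum_filter_add_sum_filter_not _ (fun T => i ∈ T)]
      simp only [mul_add, Finset.sum_add_distrib]
      congr 1
      · refine Finset.sum_congr rfl fun T hT => ?_
        have hT : i ∈ T := by simpa using hT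
        have : rowT (B.updateRow i (u i • v)) (Function.update u i (u i * a)) v T =
            (rowT B u v T).updateRow i (a • rowT B u v T i) := by
          ext x y
          by_cases hx : x = i
          · subst hx; simp [rowT, hT]; ring
          · rw [Matrix.updateRow_ne hx]; simp [rowT, hx]
        rw [this, permB_updateRow_smul]
        ring
      · refine Finset.sum_nbij' (fun T => insert i T) (fun T => T.erase i) ?_ ?_ ?_ ?_ ?_
        · simp
        · simp
        · intro T hT; simp at hT; simp [hT]
        · intro T hT; simp at hT; simp [hT]
        · intro T hT
          have hT : i ∉ T := by simpa using hT
          rw [Finset.card_insert_of_notMem hT, Nat.add_sub_cancel]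
          congr 2
          ext x y
          by_cases hx : x = i
          · subst hx; simp [rowT, hT]
          · simp [rowT, hx]
    simp only [e2]
    rw [Finset.sum_comm, Finset.mul_sum, Finset.mul_sum, ← Finset.sum_add_distrib]
    refine Finset.sum_congr rfl fun T _ => ?_
    have := dd_succ a β T.card r
    simp only [Finset.sum_ite_mem, Finset.univ_inter, Finset.sum_const, nsmul_eq_mul]
    linear_combination (-permB β (rowT B u v T)) * this

lemma hasSum_blk {γ : Type*} [Fintype γ] [DecidableEq γ] 
    (β : ℝ) (B : Matrix γ γ ℝ) (u v : γ → ℝ) (a : ℝ) (ha : |a| < 1) :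
    HasSum (fun r : ℕ => (r.factorial : ℝ)⁻¹ * permB β (blk B u v a r))
      (permB β (B + (1 - a)⁻¹ • Matrix.vecMulVec u v) * (1 - a) ^ (-β)) := by
  simp only [permB_blk]
  have hpos : 0 < 1 - a := by linarith [(abs_lt.1 ha).2]
  rw [permB_rank_one, Finset.sum_mul]
  refine hasSum_sum fun T _ => ?_
  have := (hasSum_dd a β T.card ha).mul_left (permB β (rowT B u v T))
  convert! this using 1
  rw [neg_add, Real.rpow_add hpos, Real.rpow_neg hpos.le (T.card : ℝ), Real.rpow_natCast, inv_pow]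
  ring

lemma abs_permB_le {α : Type*} [Fintype α] [DecidableEq α] (β : ℝ) (M N : Matrix α α ℝ)
    (h : ∀ i j, |M i j| = N i j) : |permB β M| ≤ permB |β| N := by
  unfold permB
  refine (Finset.abs_sum_le_sum_abs _ _).trans (le_of_eq ?_)
  refine Finset.sum_congr rfl fun π _ => ?_
  rw [abs_mul, abs_pow, Finset.abs_prod]
  simp only [h]

lemma permB_nonneg {α : Type*} [Fintype α] [DecidableEq α] (β : ℝ) (hβ : 0 ≤ β) (M : Matrix α α ℝ)
    (h : ∀ i j, 0 ≤ M i j) : 0 ≤ permB β M := by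
  unfold permB
  exact Finset.sum_nonneg fun π _ => mul_nonneg (pow_nonneg hβ _) (Finset.prod_nonneg fun i _ => h _ _)

/-- The block matrix with all repetitions. -/
def bigM {n' n : ℕ} (B : Matrix (Fin n') (Fin n') ℝ) (U : Matrix (Fin n') (Fin n) ℝ)
    (V : Matrix (Fin n) (Fin n') ℝ) (A : Matrix (Fin n) (Fin n) ℝ) (r : Fin n → ℕ) :=
  Matrix.fromBlocks B (repU U r) (repV V r) (repA A r)

/-- The summand. -/
def trm {n' n : ℕ} (β : ℝ) (B : Matrix (Fin n') (Fin n') ℝ) (U : Matrix (Fin n') (Fin n) ℝ)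
    (V : Matrix (Fin n) (Fin n') ℝ) (A : Matrix (Fin n) (Fin n) ℝ) (r : Fin n → ℕ) : ℝ :=
  ((∏ i, (r i).factorial : ℕ) : ℝ)⁻¹ * permB β (bigM B U V A r)

section
variable {n' n : ℕ} (β : ℝ) (B : Matrix (Fin n') (Fin n') ℝ) (U : Matrix (Fin n') (Fin n) ℝ)
    (V : Matrix (Fin n) (Fin n') ℝ) (A : Matrix (Fin n) (Fin n) ℝ) (r : Fin n → ℕ)

lemma abs_trm_le : |trm β B U V A r| ≤ trm |β| (B.map abs) (U.map abs) (V.map abs) (A.map abs) r := by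
  unfold trm
  rw [abs_mul, abs_of_nonneg (by positivity : (0:ℝ) ≤ ((∏ i, (r i).factorial : ℕ) : ℝ)⁻¹)]
  refine mul_le_mul_of_nonneg_left (abs_permB_le _ _ _ ?_) (by positivity)
  rintro (i | i) (j | j) <;> rfl

lemma trm_nonneg (hβ : 0 ≤ β) (hB : ∀ i j, 0 ≤ B i j) (hU : ∀ i j, 0 ≤ U i j)
    (hV : ∀ i j, 0 ≤ V i j) (hA : ∀ i j, 0 ≤ A i j) : 0 ≤ trm β B U V A r := by
  unfold trm
  refine mul_nonneg (by positivity) (permB_nonneg β hβ _ ?_)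
  rintro (i | i) (j | j)
  exacts [hB _ _, hU _ _, hV _ _, hA _ _]
end

/-- Peel off the first symbol. -/
def peel (n' n : ℕ) (r : Fin (n + 1) → ℕ) :
    (Fin n' ⊕ ((i : Fin n) × Fin (r i.succ))) ⊕ Fin (r 0) ≃
      Fin n' ⊕ ((i : Fin (n + 1)) × Fin (r i)) :=
  Equiv.ofBijective (Sum.elim (Sum.elim Sum.inl (fun k => Sum.inr ⟨k.1.succ, k.2⟩))
    (fun k => Sum.inr ⟨0, k⟩)) (by
    constructor
    · rintro ((x | ⟨i, k⟩) | k) ((y | ⟨j, l⟩) | l) h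
      · simpa using h
      · simp at h
      · simp at h
      · simp at h
      · simp only [Sum.elim_inl, Sum.elim_inr, Sum.inr.injEq, Sigma.mk.injEq, Fin.succ_inj] at h
        obtain ⟨rfl, h⟩ := h
        simp at h
        simp [h]
      · simp [Fin.succ_ne_zero] at h
      · simp at h
      · simp [(Fin.succ_ne_zero _).symm] at h
      · simpa using h
    · rintro (x | ⟨i, k⟩)
      · exact ⟨Sum.inl (Sum.inl x), rfl⟩
      · cases i using Fin.cases with
        | zero => exact ⟨Sum.inr k, rfl⟩
        | succ i => exact ⟨Sum.inl (Sum.inr ⟨i, k⟩), rfl⟩)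

section
variable {n' n : ℕ} (β : ℝ) (B : Matrix (Fin n') (Fin n') ℝ) (U : Matrix (Fin n') (Fin (n+1)) ℝ)
    (V : Matrix (Fin (n+1)) (Fin n') ℝ) (A : Matrix (Fin (n+1)) (Fin (n+1)) ℝ)

/-- Schur complements with respect to the first symbol. -/
def schA : Matrix (Fin n) (Fin n) ℝ :=
  Matrix.of fun i j => A i.succ j.succ + (1 - A 0 0)⁻¹ * (A i.succ 0 * A 0 j.succ)
/-- Schur complements with respect to the first symbol. -/
def schU : Matrix (Fin n') (Fin n) ℝ :=
  Matrix.of fun i j => U i j.succ + (1 - A 0 0)⁻¹ * (U i 0 * A 0 j.succ)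
/-- Schur complements with respect to the first symbol. -/
def schV : Matrix (Fin n) (Fin n') ℝ :=
  Matrix.of fun i j => V i.succ j + (1 - A 0 0)⁻¹ * (A i.succ 0 * V 0 j)
/-- Schur complements with respect to the first symbol. -/
def schB : Matrix (Fin n') (Fin n') ℝ :=
  Matrix.of fun i j => B i j + (1 - A 0 0)⁻¹ * (U i 0 * V 0 j)

lemma fiber_hasSum (ha : |A 0 0| < 1) (r' : Fin n → ℕ) :
    HasSum (fun r0 : ℕ => trm β B U V A (Fin.cons r0 r'))
      (trm β (schB B U V A) (schU U A) (schV V A) (schA A) r' * (1 - A 0 0) ^ (-β)) := by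
  let u : Fin n' ⊕ ((i : Fin n) × Fin (r' i)) → ℝ := Sum.elim (fun i => U i 0) (fun k => A k.1.succ 0)
  let v : Fin n' ⊕ ((i : Fin n) × Fin (r' i)) → ℝ := Sum.elim (fun i => V 0 i) (fun k => A 0 k.1.succ)
  let C : Matrix (Fin n' ⊕ ((i : Fin n) × Fin (r' i))) (Fin n' ⊕ ((i : Fin n) × Fin (r' i))) ℝ :=
    bigM B (U.submatrix id Fin.succ) (V.submatrix Fin.succ id) (A.submatrix Fin.succ Fin.succ) r'
  have h := (hasSum_blk β C u v (A 0 0) ha).mul_left (((∏ i, (r' i).factorial : ℕ) : ℝ)⁻¹)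
  have e1 : C + (1 - A 0 0)⁻¹ • Matrix.vecMulVec u v =
      bigM (schB B U V A) (schU U A) (schV V A) (schA A) r' := by
    ext x y
    rcases x with x | x <;> rcases y with y | y <;> rfl
  have e2 : ∀ r0 : ℕ, permB β (bigM B U V A (Fin.cons r0 r')) = permB β (blk C u v (A 0 0) r0) := by
    intro r0
    rw [← permB_submatrix β (peel n' n (Fin.cons r0 r'))]
    congr 1
    ext x y
    rcases x with (x | x) | x <;> rcases y with (y | y) | y <;> rfl
  rw [e1] at h
  convert! h using 1
  · funext r0
    rw [trm, e2, Fin.prod_univ_succ]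
    simp
    ring
  · rw [trm]; ring

lemma schur_det (ha : A 0 0 ≠ 1) : (1 - A).det = (1 - A 0 0) * (1 - schA A).det := by
  have ha' : 1 - A 0 0 ≠ 0 := sub_ne_zero.2 ha.symm
  let e : Fin n ⊕ Unit ≃ Fin (n+1) := (Equiv.optionEquivSumPUnit (Fin n)).symm.trans (finSuccEquiv n).symm
  rw [← Matrix.det_submatrix_equiv_self e]
  have : (1 - A).submatrix e e = Matrix.fromBlocks (1 - A.submatrix Fin.succ Fin.succ) 
      (Matrix.of fun i _ => - A i.succ 0) (Matrix.of fun _ j => - A 0 j.succ)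
      (Matrix.of fun (_ _ : Unit) => 1 - A 0 0) := by
    ext x y
    rcases x with x | x <;> rcases y with y | y <;>
      simp [e, Matrix.one_apply, Fin.succ_ne_zero, (Fin.succ_ne_zero _).symm]
  rw [this]
  have hdet : (Matrix.of fun (_ _ : Unit) => 1 - A 0 0).det = 1 - A 0 0 := by simp
  letI : Invertible (Matrix.of fun (_ _ : Unit) => 1 - A 0 0) :=
    ⟨Matrix.of fun _ _ => (1 - A 0 0)⁻¹, by ext; simp [Matrix.mul_apply, ha'], 
      by ext; simp [Matrix.mul_apply, ha']⟩
  have hinv : ⅟(Matrix.of fun (_ _ : Unit) => 1 - A 0 0) = Matrix.of fun _ _ => (1 - A 0 0)⁻¹ := rfl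
  rw [Matrix.det_fromBlocks₂₂, hdet, hinv]
  congr 2
  ext i j
  simp [schA, Matrix.mul_apply]
  ring

lemma schur_inv (ha : A 0 0 ≠ 1) (hd : (1 - schA A).det ≠ 0) :
    schB B U V A + schU U A * (1 - schA A)⁻¹ * schV V A = B + U * (1 - A)⁻¹ * V := by
  have ha' : 1 - A 0 0 ≠ 0 := sub_ne_zero.2 ha.symm
  have hd2 : (1 - A).det ≠ 0 := by rw [schur_det A ha]; exact mul_ne_zero ha' hd
  set Y := (1 - schA A)⁻¹ * schV V A with hY
  have hY1 : (1 - schA A) * Y = schV V A := by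
    rw [hY, ← Matrix.mul_assoc, Matrix.mul_nonsing_inv _ (isUnit_iff_ne_zero.2 hd), Matrix.one_mul]
  let X : Matrix (Fin (n+1)) (Fin n') ℝ := Matrix.of fun i j =>
    Fin.cases ((1 - A 0 0)⁻¹ * (V 0 j + ∑ k, A 0 k.succ * Y k j)) (fun k => Y k j) i
  have X0 : ∀ j, X 0 j = (1 - A 0 0)⁻¹ * (V 0 j + ∑ k, A 0 k.succ * Y k j) := fun j => rfl
  have Xs : ∀ k j, X (Fin.succ k) j = Y k j := fun k j => rfl
  have hX : (1 - A) * X = V := by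
    rw [Matrix.sub_mul, Matrix.one_mul]
    ext i j
    rw [Matrix.sub_apply, Matrix.mul_apply, Fin.sum_univ_succ]
    simp only [Xs]
    cases i using Fin.cases with
    | zero => rw [X0]; field_simp; ring
    | succ i =>
      rw [Xs, X0]
      have := congrFun (congrFun hY1 i) j
      rw [Matrix.sub_mul, Matrix.one_mul, Matrix.sub_apply, Matrix.mul_apply] at this
      simp only [schA, schV, Matrix.of_apply, add_mul, Finset.sum_add_distrib] at this
      have h3 : ∑ x : Fin n, (1 - A 0 0)⁻¹ * (A i.succ 0 * A 0 x.succ) * Y x j = 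
          (1 - A 0 0)⁻¹ * A i.succ 0 * ∑ x : Fin n, A 0 x.succ * Y x j := by
        rw [Finset.mul_sum]; exact Finset.sum_congr rfl fun _ _ => by ring
      rw [h3] at this
      linear_combination this
  have hX2 : (1 - A)⁻¹ * V = X := by
    rw [← hX, ← Matrix.mul_assoc, Matrix.nonsing_inv_mul _ (isUnit_iff_ne_zero.2 hd2), Matrix.one_mul]
  rw [Matrix.mul_assoc, Matrix.mul_assoc, hX2, ← hY]
  ext i j
  rw [Matrix.add_apply, Matrix.add_apply, Matrix.mul_apply, Matrix.mul_apply, Fin.sum_univ_succ]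
  simp only [Xs, X0, schB, schU, Matrix.of_apply, add_mul, Finset.sum_add_distrib]
  have h3 : ∑ x : Fin n, (1 - A 0 0)⁻¹ * (U i 0 * A 0 x.succ) * Y x j = 
          (1 - A 0 0)⁻¹ * U i 0 * ∑ x : Fin n, A 0 x.succ * Y x j := by
        rw [Finset.mul_sum]; exact Finset.sum_congr rfl fun _ _ => by ring
  rw [h3]
  ring
end

/-- The claim for a given matrix `A`. -/
def Good (n' n : ℕ) (A : Matrix (Fin n) (Fin n) ℝ) : Prop :=
  0 < (1 - A).det ∧ ∀ (β : ℝ) (B : Matrix (Fin n') (Fin n') ℝ) (U : Matrix (Fin n') (Fin n) ℝ)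
    (V : Matrix (Fin n) (Fin n') ℝ), HasSum (trm β B U V A)
      (permB β (B + U * (1 - A)⁻¹ * V) * (1 - A).det ^ (-β))

/-- Reordering of the index. -/
def rEquiv (n : ℕ) : (Fin n → ℕ) × ℕ ≃ (Fin (n + 1) → ℕ) :=
  (Equiv.prodComm _ _).trans (Fin.consEquiv (fun _ => ℕ))

lemma summable_step_nonneg {n' n : ℕ} (β : ℝ) (B : Matrix (Fin n') (Fin n') ℝ)
    (U : Matrix (Fin n') (Fin (n+1)) ℝ)
    (V : Matrix (Fin (n+1)) (Fin n') ℝ) (A : Matrix (Fin (n+1)) (Fin (n+1)) ℝ)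
    (ha : |A 0 0| < 1) (hG : Good n' n (schA A))
    (hβ : 0 ≤ β) (hB : ∀ i j, 0 ≤ B i j) (hU : ∀ i j, 0 ≤ U i j)
    (hV : ∀ i j, 0 ≤ V i j) (hA : ∀ i j, 0 ≤ A i j) :
    Summable (trm β B U V A) := by
  rw [← (rEquiv n).summable_iff, summable_prod_of_nonneg]
  · refine ⟨fun r' => (fiber_hasSum β B U V A ha r').summable, ?_⟩
    have : (fun x : Fin n → ℕ => ∑' y : ℕ, (trm β B U V A ∘ rEquiv n) (x, y)) =
      fun r' => trm β (schB B U V A) (schU U A) (schV V A) (schA A) r' * (1 - A 0 0) ^ (-β) := by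
      funext r'
      exact (fiber_hasSum β B U V A ha r').tsum_eq
    rw [this]
    exact (hG.2 β _ _ _).summable.mul_right _
  · intro x
    exact trm_nonneg β B U V A _ hβ hB hU hV hA

lemma good_step {n' n : ℕ} (A : Matrix (Fin (n+1)) (Fin (n+1)) ℝ)
    (ha : |A 0 0| < 1) (hG : Good n' n (schA A)) (hG' : Good n' n (schA (A.map abs))) :
    Good n' (n + 1) A := by
  have hpos : 0 < 1 - A 0 0 := by linarith [(abs_lt.1 ha).2]
  have hne : A 0 0 ≠ 1 := by linarith
  refine ⟨by rw [schur_det A hne]; exact mul_pos hpos hG.1, ?_⟩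
  intro β B U V
  have hs : Summable (trm β B U V A) := by
    refine Summable.of_norm_bounded (summable_step_nonneg |β| (B.map abs) (U.map abs) (V.map abs)
      (A.map abs) (by simpa using ha) hG' (abs_nonneg _) ?_ ?_ ?_ ?_) 
      (fun r => abs_trm_le β B U V A r)
    all_goals intro i j; exact abs_nonneg _
  have h1 := hs.hasSum
  rw [← (rEquiv n).hasSum_iff] at h1
  have h2 := h1.prod_fiberwise (fun r' => fiber_hasSum β B U V A ha r')
  have h3 := (hG.2 β (schB B U V A) (schU U A) (schV V A)).mul_right ((1 - A 0 0) ^ (-β))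
  have h4 := h2.unique h3
  have h5 := hs.hasSum
  rw [h4, schur_inv B U V A hne hG.1.ne'] at h5
  rw [schur_det A hne, Real.mul_rpow hpos.le hG.1.le]
  convert! h5 using 1
  ring

lemma permB_sum_empty {α γ : Type*} [Fintype α] [DecidableEq α] [Fintype γ] [DecidableEq γ]
    [IsEmpty γ] (β : ℝ) (M : Matrix (α ⊕ γ) (α ⊕ γ) ℝ) :
    permB β M = permB β (M.submatrix Sum.inl Sum.inl) :=
  (permB_submatrix β (Equiv.sumEmpty α γ).symm M).symm

lemma trm_zero {n' : ℕ} (β : ℝ) (B : Matrix (Fin n') (Fin n') ℝ) (U : Matrix (Fin n') (Fin 0) ℝ)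
    (V : Matrix (Fin 0) (Fin n') ℝ) (A : Matrix (Fin 0) (Fin 0) ℝ) (r : Fin 0 → ℕ) :
    trm β B U V A r = permB β B := by
  rw [trm, permB_sum_empty]
  have : (bigM B U V A r).submatrix Sum.inl Sum.inl = B := by
    ext i j
    rfl
  rw [this, Fin.prod_univ_zero]
  simp

lemma good_zero (n' : ℕ) (A : Matrix (Fin 0) (Fin 0) ℝ) : Good n' 0 A := by
  have hdet : (1 - A).det = 1 := Matrix.det_fin_zero
  refine ⟨by rw [hdet]; exact one_pos, ?_⟩
  intro β B U V
  have hf : trm β B U V A = fun _ => permB β B := by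
    funext r
    exact trm_zero β B U V A r
  have h : ∀ c : ℝ, HasSum (fun _ : Fin 0 → ℕ => c) c := fun c =>
    hasSum_single (f := fun _ : Fin 0 → ℕ => c) (fun i => i.elim0)
      (fun b hb => absurd (Subsingleton.elim _ _) hb)
  have h1 : U * (1 - A)⁻¹ * V = 0 := by
    ext i j
    rw [Matrix.mul_apply, Fin.sum_univ_zero, Matrix.zero_apply]
  rw [hdet, h1, add_zero, Real.one_rpow, mul_one]
  rw [hf]
  exact h _

lemma schA_small {n : ℕ} (ε : ℝ) (hε : 0 < ε) (A : Matrix (Fin (n+1)) (Fin (n+1)) ℝ)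
    (hA : ∀ i j, |A i j| < min (1/2) (ε/4)) (i j : Fin n) : |schA A i j| < ε := by
  have h12 : ∀ i j, |A i j| < 1/2 := fun i j => (hA i j).trans_le (min_le_left _ _)
  have h4 : ∀ i j, |A i j| < ε/4 := fun i j => (hA i j).trans_le (min_le_right _ _)
  have hpos : 1/2 < 1 - A 0 0 := by linarith [(abs_lt.1 (h12 0 0)).2]
  have hinv : |(1 - A 0 0)⁻¹| ≤ 2 := by
    rw [abs_inv, abs_of_pos (by linarith)]
    rw [inv_le_comm₀ (by linarith) (by norm_num)]
    linarith
  have h5 : |A i.succ 0 * A 0 j.succ| ≤ 1/2 * (ε/4) := by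
    rw [abs_mul]
    exact mul_le_mul (h12 _ _).le (h4 _ _).le (abs_nonneg _) (by norm_num)
  have h6 : |(1 - A 0 0)⁻¹ * (A i.succ 0 * A 0 j.succ)| ≤ 2 * (1/2 * (ε/4)) := by
    rw [abs_mul]
    exact mul_le_mul hinv h5 (abs_nonneg _) (by norm_num)
  have h7 := abs_add_le (A i.succ j.succ) ((1 - A 0 0)⁻¹ * (A i.succ 0 * A 0 j.succ))
  have h8 := h4 i.succ j.succ
  show |A i.succ j.succ + (1 - A 0 0)⁻¹ * (A i.succ 0 * A 0 j.succ)| < ε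
  linarith

lemma exists_good (n' n : ℕ) : ∃ ε > (0 : ℝ), ∀ A : Matrix (Fin n) (Fin n) ℝ,
    (∀ i j, |A i j| < ε) → Good n' n A := by
  induction n with
  | zero => exact ⟨1, one_pos, fun A _ => good_zero n' A⟩
  | succ n ih =>
    obtain ⟨ε, hε, h⟩ := ih
    refine ⟨min (1/2) (ε/4), by positivity, fun A hA => ?_⟩
    refine good_step A ?_ (h _ (schA_small ε hε A hA)) (h _ (schA_small ε hε _ ?_))
    · have := (hA 0 0).trans_le (min_le_left _ _)
      linarith
    · intro i j
      simpa using hA i j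

attribute [local instance] Matrix.linftyOpNormedRing in
lemma inv_eq_tsum {n : ℕ} (A : Matrix (Fin n) (Fin n) ℝ) (hA : ∀ i j, |A i j| < 1 / (n + 1)) :
    (∑' k : ℕ, A ^ k) = (1 - A)⁻¹ := by
  have hn : ‖A‖ < 1 := by
    rw [Matrix.linfty_opNorm_def]
    have : ((Finset.univ.sup fun i => ∑ j, ‖A i j‖₊ : NNReal)) < 1 := by
      rw [Finset.sup_lt_iff (by simp)]
      intro i _
      rw [← NNReal.coe_lt_coe]
      push_cast
      calc ∑ j, ‖A i j‖ ≤ ∑ j : Fin n, (1 / (n + 1) : ℝ) := 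
            Finset.sum_le_sum fun j _ => (hA i j).le
        _ = n / (n + 1) := by simp; ring
        _ < 1 := by rw [div_lt_one (by positivity)]; linarith
    exact_mod_cast this
  have hc : CompleteSpace (Matrix (Fin n) (Fin n) ℝ) :=
    inferInstanceAs (CompleteSpace (Fin n → Fin n → ℝ))
  have hc' : HasSummableGeomSeries (Matrix (Fin n) (Fin n) ℝ) := by
    refine ⟨fun x hx => ?_⟩
    refine @Summable.of_norm_bounded_eventually_nat _ _ hc _ _ (summable_geometric_of_lt_one (norm_nonneg x) hx) ?_
    exact Filter.eventually_atTop.2 ⟨1, fun k hk => norm_pow_le' x hk⟩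
  exact (Matrix.inv_eq_left_inv (geom_series_mul_neg A hn)).symm

/-- The Submatrix MacMahon Master Theorem:
`Σ_r (1/r!) perm_β [[B, U(n^r)],[V(n^r), A(n^r,n^r)]] = perm_β(B̃)/det(I-A)^β`,
with `B̃ = B + U (I-A)⁻¹ V` and `(I-A)⁻¹ = Σ_{k≥0} A^k`, for small `A`. -/
theorem submatrix_MMT (n' n : ℕ) (β : ℝ) :
    ∃ ε > (0 : ℝ), ∀ (B : Matrix (Fin n') (Fin n') ℝ) (U : Matrix (Fin n') (Fin n) ℝ)
      (V : Matrix (Fin n) (Fin n') ℝ) (A : Matrix (Fin n) (Fin n) ℝ),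
      (∀ i j, |A i j| < ε) →
      ∑' r : Fin n → ℕ, ((∏ i, (r i).factorial : ℕ) : ℝ)⁻¹ *
          permB β (Matrix.fromBlocks B (repU U r) (repV V r) (repA A r))
        = permB β (B + U * (∑' k : ℕ, A ^ k) * V) / Matrix.det (1 - A) ^ β := by
  obtain ⟨ε, hε, h⟩ := exists_good n' n
  refine ⟨min ε (1 / (n + 1)), by positivity, fun B U V A hA => ?_⟩
  have hG := h A (fun i j => (hA i j).trans_le (min_le_left _ _))
  rw [inv_eq_tsum A (fun i j => (hA i j).trans_le (min_le_right _ _)), div_eq_mul_inv,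
    ← Real.rpow_neg hG.1.le]
  exact (hG.2 β B U V).tsum_eq
end
end

section
/- Let p_r(α,β) = Σ_{s,t} p_{rst} α^s β^t where p_{rst} counts partial permutations of an r-element set having s non-closed (necklace) components and t cycles; equivalently pperm_{β,θ,φ} of the r×r all-z matrix with θ_i = φ_i = √(αz) equals p_r(α,β) z^r. Then the exponential generating function is Σ_{r≥0} p_r(α,β) z^r / r! = exp(αz/(1-z)) / (1-z)^β. -/
open scoped Classical
open Matrix

noncomputable section

/-- A partial permutation (injective partial map) of `α`: a domain together with
an injection of the domain into `α`. -/
abbrev PPerm (α : Type*) [Fintype α] [DecidableEq α] :=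
  (D : Finset α) × ({x // x ∈ D} ↪ α)

variable {α : Type*} [Fintype α] [DecidableEq α]

/-- The partial function determined by a partial permutation. -/
def pfun (ψ : PPerm α) : α → Option α :=
  fun x => if h : x ∈ ψ.1 then some (ψ.2 ⟨x, h⟩) else none

/-- `k`-fold iteration of a partial permutation. -/
def piter (ψ : PPerm α) (k : ℕ) (x : α) : Option α :=
  (fun o => o.bind (pfun ψ))^[k] (some x)

/-- The image of a partial permutation. -/
def pim (ψ : PPerm α) : Finset α := Finset.univ.image fun d => ψ.2 d

/-- `x` lies on a closed cycle of the partial permutation `ψ`. -/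
def isCyc (ψ : PPerm α) (x : α) : Prop :=
  ∃ k ∈ Finset.range (Fintype.card α + 1), k ≠ 0 ∧ piter ψ k x = some x

/-- The forward orbit of `x` under `ψ`. -/
def porb (ψ : PPerm α) (x : α) : Finset α :=
  Finset.univ.filter fun y => ∃ k ∈ Finset.range (Fintype.card α + 1), piter ψ k x = some y

/-- The number of cycles `C(π_ψ)` of the permutation part of `ψ`. -/
def pCycleCount (ψ : PPerm α) : ℕ :=
  ((Finset.univ.filter fun x => isCyc ψ x).image (porb ψ)).card

/-- The `(β,θ,φ)`-extended partial permanent of a matrix. -/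
def ppermB {R : Type*} [CommRing R] (β : R) (θ φ : α → R) (M : Matrix α α R) : R :=
  ∑ ψ : PPerm α, β ^ pCycleCount ψ * (∏ d : {x // x ∈ ψ.1}, M d (ψ.2 d)) *
    (∏ j ∈ Finset.univ \ pim ψ, θ j) * (∏ k ∈ Finset.univ \ ψ.1, φ k)

/-- `p_r(α,β) = Σ_{s,t} p_{rst} α^s β^t`, where `p_{rst}` counts partial
permutations of an `r`-element set with `s` open (path/necklace) components and
`t` cycles: each partial permutation `ψ` has `r - |dom ψ|` path components. -/
def pPoly (r : ℕ) (a b : ℝ) : ℝ :=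
  ∑ ψ : PPerm (Fin r), a ^ (r - ψ.1.card) * b ^ pCycleCount ψ

section Rel
open Relation

/-- Vertices reachable from `x`. -/
def rorb (E : α → α → Prop) (x : α) : Finset α :=
  Finset.univ.filter fun y => ReflTransGen E x y

/-- The set of cycles of a relation. -/
def rcyc (E : α → α → Prop) : Finset (Finset α) :=
  (Finset.univ.filter fun x => TransGen E x x).image (rorb E)

theorem rtg_insert {E E' : α → α → Prop} {x y : α}
    (hE : ∀ u v, E' u v ↔ E u v ∨ (u = x ∧ v = y)) {u v : α} (h : ReflTransGen E' u v) :
    ReflTransGen E u v ∨ (ReflTransGen E u x ∧ ReflTransGen E y v) := by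
  induction h with
  | refl => exact Or.inl .refl
  | tail _ h ih =>
    rcases (hE _ _).1 h with h | ⟨rfl, rfl⟩
    · rcases ih with ih | ⟨h1, h2⟩
      · exact Or.inl (ih.tail h)
      · exact Or.inr ⟨h1, h2.tail h⟩
    · rcases ih with ih | ⟨h1, h2⟩
      · exact Or.inr ⟨ih, .refl⟩
      · exact Or.inr ⟨h1, .refl⟩

theorem rcyc_mono_aux {E : α → α → Prop} {u v : α} (hu : TransGen E u u)
    (hfun : ∀ u v w, E u v → E u w → v = w)
    (h : ReflTransGen E u v) : ReflTransGen E v u := by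
  induction h with
  | refl => exact .refl
  | tail _ h ih =>
    rcases ih.cases_head with rfl | ⟨w, hw, hw'⟩
    · obtain ⟨w, hw, hw'⟩ := TransGen.head'_iff.1 hu
      rw [hfun _ _ _ h hw]; exact hw'
    · rw [hfun _ _ _ h hw]; exact hw'

theorem rcyc_insert {E E' : α → α → Prop} {x y : α}
    (hE : ∀ u v, E' u v ↔ E u v ∨ (u = x ∧ v = y))
    (hfun : ∀ u v w, E u v → E u w → v = w)
    (hx : ∀ v, ¬ E x v) (hy : ∀ u, ¬ E u y) :
    (rcyc E').card = (rcyc E).card + if ReflTransGen E y x then 1 else 0 := by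
  have mono : ∀ {u v}, ReflTransGen E u v → ReflTransGen E' u v :=
    fun h => ReflTransGen.mono (fun a b hab => (hE a b).2 (Or.inl hab)) _ _ h
  have hxy : E' x y := (hE _ _).2 (Or.inr ⟨rfl, rfl⟩)
  have hxeq : ∀ v, ReflTransGen E x v → v = x := by
    intro v h
    rcases h.cases_head with rfl | ⟨w, hw, _⟩
    · rfl
    · exact (hx _ hw).elim
  have hyeq : ∀ v, ReflTransGen E v y → v = y := by
    intro v h
    rcases h.cases_tail with h | ⟨w, _, hw⟩
    · exact h.symm
    · exact (hy _ hw).elim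
  have hnx : ∀ u, TransGen E u u → ¬ ReflTransGen E u x := by
    intro u hu h
    have := hxeq _ (rcyc_mono_aux hu hfun h)
    subst this
    obtain ⟨w, hw, _⟩ := TransGen.head'_iff.1 hu
    exact hx _ hw
  have hny : ¬ TransGen E y y := by
    intro h
    obtain ⟨w, _, hw⟩ := TransGen.tail'_iff.1 h
    exact hy _ hw
  have horb : ∀ u, TransGen E u u → rorb E' u = rorb E u := by
    intro u hu
    ext v
    simp only [rorb, Finset.mem_filter, Finset.mem_univ, true_and]
    refine ⟨fun h => ?_, mono⟩
    rcases rtg_insert hE h with h | ⟨h, _⟩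
    · exact h
    · exact (hnx u hu h).elim
  have hcyc : ∀ v, TransGen E' v v → ¬ TransGen E v v →
      ReflTransGen E y x ∧ ReflTransGen E y v ∧ ReflTransGen E v x := by
    intro v h hn
    obtain ⟨w, hw, hwv⟩ := TransGen.head'_iff.1 h
    rcases (hE _ _).1 hw with hw | ⟨rfl, rfl⟩
    · rcases rtg_insert hE hwv with h | ⟨h1, h2⟩
      · exact (hn (TransGen.head'_iff.2 ⟨w, hw, h⟩)).elim
      · exact ⟨h2.trans (h1.head hw), h2, h1.head hw⟩
    · rcases rtg_insert hE hwv with h | ⟨h1, h2⟩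
      · exact ⟨h, h, .refl⟩
      · exact ⟨h1, h2, .refl⟩
  have hmonoT : ∀ u, TransGen E u u → TransGen E' u u :=
    fun u h => TransGen.mono (fun a b hab => (hE a b).2 (Or.inl hab)) _ _ h
  split_ifs with hyx
  · have hnot : rorb E' y ∉ rcyc E := by
      intro h
      simp only [rcyc, Finset.mem_image, Finset.mem_filter, Finset.mem_univ, true_and] at h
      obtain ⟨u, hu, he⟩ := h
      have : y ∈ rorb E u := by rw [he]; simp [rorb, ReflTransGen.refl]
      simp only [rorb, Finset.mem_filter, Finset.mem_univ, true_and] at this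
      have := hyeq _ this
      subst this
      exact hny hu
    rw [← Finset.card_insert_of_notMem hnot]
    congr 1
    ext s
    simp only [rcyc, Finset.mem_image, Finset.mem_insert, Finset.mem_filter, Finset.mem_univ, true_and]
    constructor
    · rintro ⟨u, hu, rfl⟩
      by_cases h : TransGen E u u
      · exact Or.inr ⟨u, h, (horb u h).symm⟩
      · left
        obtain ⟨_, h2, h3⟩ := hcyc u hu h
        have huy : ReflTransGen E' u y := (mono h3).tail hxy
        ext v
        simp only [rorb, Finset.mem_filter, Finset.mem_univ, true_and]
        exact ⟨fun h => (mono h2).trans h, fun h => huy.trans h⟩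
    · rintro (rfl | ⟨u, hu, rfl⟩)
      · exact ⟨y, TransGen.tail'_iff.2 ⟨x, mono hyx, hxy⟩, rfl⟩
      · exact ⟨u, hmonoT u hu, horb u hu⟩
  · rw [add_zero]
    congr 1
    ext s
    simp only [rcyc, Finset.mem_image, Finset.mem_filter, Finset.mem_univ, true_and]
    constructor
    · rintro ⟨u, hu, rfl⟩
      by_cases h : TransGen E u u
      · exact ⟨u, h, (horb u h).symm⟩
      · exact (hyx (hcyc u hu h).1).elim
    · rintro ⟨u, hu, rfl⟩
      exact ⟨u, hmonoT u hu, horb u hu⟩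

theorem exists_unique_start {E : α → α → Prop} {x : α}
    (hfun : ∀ u v w, E u v → E u w → v = w)
    (hinj : ∀ u v w, E u w → E v w → u = v)
    (hx : ∀ v, ¬ E x v) : ∃! y, (∀ u, ¬ E u y) ∧ ReflTransGen E y x := by
  have hex : ∃ y, (∀ u, ¬ E u y) ∧ ReflTransGen E y x := by
    by_contra hcon
    push Not at hcon
    have : ∀ a : {a // ReflTransGen E a x}, ∃ c : {a // ReflTransGen E a x}, E c.1 a.1 := by
      rintro ⟨a, ha⟩
      by_contra hno
      push Not at hno
      exact hcon a (fun u hu => hno ⟨u, ha.head hu⟩ hu) ha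
    choose f hf using this
    have hfi : Function.Injective f := by
      intro a c hac
      have h1 := hf a
      rw [hac] at h1
      exact Subtype.ext (hfun _ _ _ h1 (hf c))
    obtain ⟨a, ha⟩ := Finite.injective_iff_surjective.1 hfi ⟨x, .refl⟩
    have := hf a
    rw [ha] at this
    exact hx _ this
  obtain ⟨y, hy, hyx⟩ := hex
  have start : ∀ {u y}, (∀ u, ¬ E u y) → ReflTransGen E u y → u = y := by
    intro u y hy h
    rcases h.cases_tail with h | ⟨w, _, hw⟩
    · exact h.symm
    · exact (hy _ hw).elim
  refine ⟨y, ⟨hy, hyx⟩, ?_⟩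
  rintro y' ⟨hy', hyx'⟩
  have U : Relator.RightUnique (Function.swap E) := fun a b c h1 h2 => hinj _ _ _ h1 h2
  rcases ReflTransGen.total_of_right_unique U (reflTransGen_swap.2 hyx)
    (reflTransGen_swap.2 hyx') with h | h
  · exact start hy (reflTransGen_swap.1 h)
  · exact (start hy' (reflTransGen_swap.1 h)).symm

/-- The edge relation of a partial permutation. -/
def pE (ψ : PPerm α) (u v : α) : Prop := pfun ψ u = some v

theorem pE_iff (ψ : PPerm α) (u v : α) : pE ψ u v ↔ ∃ h : u ∈ ψ.1, ψ.2 ⟨u, h⟩ = v := by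
  unfold pE pfun
  split_ifs with h <;> simp [h]

theorem piter_succ (ψ : PPerm α) (k : ℕ) (x : α) :
    piter ψ (k + 1) x = (piter ψ k x).bind (pfun ψ) := by
  simp [piter, Function.iterate_succ_apply']

theorem piter_add (ψ : PPerm α) (k l : ℕ) (x y : α) (h : piter ψ k x = some y) :
    piter ψ (k + l) x = piter ψ l y := by
  induction l with
  | zero => simpa [piter] using h
  | succ l ih => rw [← add_assoc, piter_succ, ih, piter_succ]

theorem piter_isSome_of_le (ψ : PPerm α) {k l : ℕ} (hkl : k ≤ l) (x y : α)
    (h : piter ψ l x = some y) : ∃ w, piter ψ k x = some w := by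
  induction l, hkl using Nat.le_induction generalizing y with
  | base => exact ⟨y, h⟩
  | succ l _ ih =>
    rw [piter_succ, Option.bind_eq_some_iff] at h
    obtain ⟨w, hw, _⟩ := h
    exact ih w hw

theorem rtg_iff_piter (ψ : PPerm α) (x y : α) :
    ReflTransGen (pE ψ) x y ↔ ∃ k, piter ψ k x = some y := by
  constructor
  · intro h
    induction h with
    | refl => exact ⟨0, rfl⟩
    | tail _ h ih =>
      obtain ⟨k, hk⟩ := ih
      exact ⟨k + 1, by rw [piter_succ, hk]; exact h⟩
  · rintro ⟨k, hk⟩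
    induction k generalizing y with
    | zero =>
      simp only [piter, Function.iterate_zero, id, Option.some.injEq] at hk
      subst hk; exact .refl
    | succ k ih =>
      rw [piter_succ, Option.bind_eq_some_iff] at hk
      obtain ⟨w, hw, h⟩ := hk
      exact (ih w hw).tail h

theorem rtg_piter_lt (ψ : PPerm α) (x y : α) (h : ReflTransGen (pE ψ) x y) :
    ∃ k < Fintype.card α, piter ψ k x = some y := by
  have hex := (rtg_iff_piter ψ x y).1 h
  refine ⟨Nat.find hex, ?_, Nat.find_spec hex⟩
  set n := Nat.find hex with hn
  have hsp : piter ψ n x = some y := Nat.find_spec hex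
  have hw : ∀ i : Fin (n + 1), ∃ w, piter ψ i x = some w :=
    fun i => piter_isSome_of_le ψ (Nat.lt_succ_iff.1 i.2) x y hsp
  choose f hf using hw
  have key : ∀ i j : Fin (n + 1), i < j → f i ≠ f j := by
    intro i j hij he
    have hi := hf i
    rw [he] at hi
    have hjn : (j : ℕ) ≤ n := Nat.lt_succ_iff.1 j.2
    have hij' : (i : ℕ) < j := hij
    have h1 := piter_add ψ j (n - j) x _ (hf j)
    have h2 := piter_add ψ i (n - j) x _ hi
    rw [← h1, Nat.add_sub_cancel' hjn, hsp] at h2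
    exact Nat.find_min hex (m := i + (n - j)) (by omega) h2
  have hfi : Function.Injective f := by
    intro i j hij
    rcases lt_trichotomy i j with h | h | h
    · exact (key i j h hij).elim
    · exact h
    · exact (key j i h hij.symm).elim
  have := Fintype.card_le_of_injective f hfi
  simpa using this

theorem isCyc_iff (ψ : PPerm α) (x : α) : isCyc ψ x ↔ TransGen (pE ψ) x x := by
  rw [TransGen.head'_iff]
  constructor
  · rintro ⟨k, _, hk0, hk⟩
    obtain ⟨k, rfl⟩ := Nat.exists_eq_succ_of_ne_zero hk0
    obtain ⟨w, hw⟩ := piter_isSome_of_le ψ (show 1 ≤ k + 1 by omega) x x hk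
    refine ⟨w, by simpa [piter, pE] using hw, (rtg_iff_piter _ _ _).2 ⟨k, ?_⟩⟩
    rw [← piter_add ψ 1 k x w hw, add_comm]; exact hk
  · rintro ⟨w, hw, h⟩
    obtain ⟨k, hk, hk'⟩ := rtg_piter_lt ψ w x h
    refine ⟨1 + k, by simp; omega, by omega, ?_⟩
    rw [piter_add ψ 1 k x w (by simpa [piter, pE] using hw)]; exact hk'

theorem porb_eq (ψ : PPerm α) (x : α) : porb ψ x = rorb (pE ψ) x := by
  ext y
  simp only [porb, rorb, Finset.mem_filter, Finset.mem_univ, true_and]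
  constructor
  · rintro ⟨k, _, hk⟩
    exact (rtg_iff_piter _ _ _).2 ⟨k, hk⟩
  · intro h
    obtain ⟨k, hk, hk'⟩ := rtg_piter_lt ψ x y h
    exact ⟨k, by simp; omega, hk'⟩

theorem pCycleCount_eq (ψ : PPerm α) : pCycleCount ψ = (rcyc (pE ψ)).card := by
  unfold pCycleCount rcyc
  congr 1
  rw [show porb ψ = rorb (pE ψ) from funext (porb_eq ψ)]
  congr 1
  ext x
  simp [isCyc_iff]

/-- Injections on `insert x D` are injections on `D` with a value outside the range. -/
def embInsertEquiv (D : Finset α) (x : α) (hx : x ∉ D) :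
    ({u // u ∈ insert x D} ↪ α) ≃ Σ f : {u // u ∈ D} ↪ α, ↥(Set.range f)ᶜ :=
  (Equiv.embeddingCongr (Finset.subtypeInsertEquivOption hx) (Equiv.refl α)).trans
    (Function.Embedding.optionEmbeddingEquiv _ _)

theorem pE_insert (D : Finset α) (x : α) (hx : x ∉ D) (f : {u // u ∈ D} ↪ α)
    (y : ↥(Set.range f)ᶜ) (u v : α) :
    pE (⟨insert x D, (embInsertEquiv D x hx).symm ⟨f, y⟩⟩ : PPerm α) u v ↔
      pE (⟨D, f⟩ : PPerm α) u v ∨ (u = x ∧ v = y.1) := by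
  rw [pE_iff, pE_iff]
  by_cases hu : u = x
  · subst hu
    simp [hx, embInsertEquiv, Finset.subtypeInsertEquivOption, Function.Embedding.optionEmbeddingEquiv, eq_comm]
  · by_cases huD : u ∈ D
    · simp [hu, huD, embInsertEquiv, Finset.subtypeInsertEquivOption, Function.Embedding.optionEmbeddingEquiv]
    · simp [hu, huD]

theorem sum_emb (b : ℝ) (D : Finset α) :
    ∑ f : {u // u ∈ D} ↪ α, b ^ pCycleCount (⟨D, f⟩ : PPerm α) =
      ∏ j ∈ Finset.range D.card, (b + (Fintype.card α - 1 - j : ℝ)) := by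
  induction D using Finset.induction_on with
  | empty =>
    have : ∀ f : {u // u ∈ (∅ : Finset α)} ↪ α, pCycleCount (⟨∅, f⟩ : PPerm α) = 0 := by
      intro f
      rw [pCycleCount_eq, Finset.card_eq_zero, rcyc, Finset.image_eq_empty,
        Finset.filter_eq_empty_iff]
      intro u _ hu
      obtain ⟨w, hw, _⟩ := TransGen.head'_iff.1 hu
      rw [pE_iff] at hw
      simp at hw
    simp [this]
  | insert x D hx ih =>
    rw [Finset.card_insert_of_notMem hx, Finset.prod_range_succ, ← ih, Finset.sum_mul,
      ← (embInsertEquiv D x hx).symm.sum_comp, Fintype.sum_sigma]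
    refine Finset.sum_congr rfl fun f _ => ?_
    have hfun : ∀ u v w, pE (⟨D, f⟩ : PPerm α) u v → pE (⟨D, f⟩ : PPerm α) u w → v = w := by
      intro u v w h1 h2
      unfold pE at h1 h2
      exact Option.some.inj (h1.symm.trans h2)
    have hinj : ∀ u v w, pE (⟨D, f⟩ : PPerm α) u w → pE (⟨D, f⟩ : PPerm α) v w → u = v := by
      intro u v w h1 h2
      rw [pE_iff] at h1 h2
      obtain ⟨hu, h1⟩ := h1
      obtain ⟨hv, h2⟩ := h2
      have := f.injective (h1.trans h2.symm)
      simpa using this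
    have hxn : ∀ v, ¬ pE (⟨D, f⟩ : PPerm α) x v := by
      intro v h
      rw [pE_iff] at h
      exact hx h.1
    have hyn : ∀ y : α, y ∈ (Set.range f)ᶜ ↔ ∀ u, ¬ pE (⟨D, f⟩ : PPerm α) u y := by
      intro y
      simp [pE_iff]
    have hcount : ∀ y : ↥(Set.range f)ᶜ,
        pCycleCount (⟨insert x D, (embInsertEquiv D x hx).symm ⟨f, y⟩⟩ : PPerm α) =
        pCycleCount (⟨D, f⟩ : PPerm α) +
          if ReflTransGen (pE (⟨D, f⟩ : PPerm α)) y.1 x then 1 else 0 := by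
      intro y
      rw [pCycleCount_eq, pCycleCount_eq]
      exact rcyc_insert (pE_insert D x hx f y) hfun hxn ((hyn y.1).1 y.2)
    obtain ⟨y0, ⟨hy0, hy0x⟩, huniq⟩ := exists_unique_start hfun hinj hxn
    have hiff : ∀ y : ↥(Set.range f)ᶜ, ReflTransGen (pE (⟨D, f⟩ : PPerm α)) y.1 x ↔
        y = ⟨y0, (hyn y0).2 hy0⟩ := by
      intro y
      constructor
      · intro h
        exact Subtype.ext (huniq y.1 ⟨(hyn y.1).1 y.2, h⟩)
      · rintro rfl; exact hy0x
    have hcard : (Fintype.card ↥(Set.range f)ᶜ : ℝ) = Fintype.card α - D.card := by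
      have h1 : Fintype.card ↥(Set.range f)ᶜ = Fintype.card α - Fintype.card (Set.range f) :=
        Fintype.card_compl_set _
      have h2 : Fintype.card (Set.range f) = D.card := by
        rw [Set.card_range_of_injective f.injective]; simp
      rw [h1, h2, Nat.cast_sub (Finset.card_le_univ D)]
    simp_rw [hcount, hiff, pow_add]
    rw [← Finset.mul_sum]
    congr 1
    have : ∀ y : ↥(Set.range f)ᶜ, b ^ (if y = ⟨y0, (hyn y0).2 hy0⟩ then 1 else 0) =
        1 + if y = ⟨y0, (hyn y0).2 hy0⟩ then b - 1 else 0 := by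
      intro y; split_ifs <;> simp
    simp_rw [this]
    rw [Finset.sum_add_distrib, Finset.sum_ite_eq' Finset.univ]
    simp only [Finset.sum_const, Finset.card_univ, nsmul_eq_mul, mul_one, Finset.mem_univ, if_true]
    rw [hcard]
    ring

end Rel

theorem pPoly_eq (r : ℕ) (a b : ℝ) :
    pPoly r a b = ∑ p ∈ Finset.HasAntidiagonal.antidiagonal r, (r.choose p.1 : ℝ) * (a ^ p.1 *
      ∏ i ∈ Finset.range p.2, (b + p.1 + i)) := by
  unfold pPoly
  rw [Fintype.sum_sigma]
  simp_rw [← Finset.mul_sum]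
  have h : ∀ D : Finset (Fin r), a ^ (r - D.card) *
      ∑ f : {u // u ∈ D} ↪ Fin r, b ^ pCycleCount (⟨D, f⟩ : PPerm (Fin r)) =
      (fun d : ℕ => a ^ (r - d) * ∏ i ∈ Finset.range d, (b + (r - d : ℕ) + i)) D.card := by
    intro D
    have hD : D.card ≤ r := by simpa using Finset.card_le_univ D
    rw [sum_emb]
    simp only
    congr 1
    rw [← Finset.prod_range_reflect]
    refine Finset.prod_congr rfl fun j hj => ?_
    have hj := Finset.mem_range.1 hj
    rw [Nat.cast_sub hD, show D.card - 1 - j = D.card - (1 + j) by omega,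
      Nat.cast_sub (by omega)]
    simp
    ring
  have h2 := Finset.sum_powerset_apply_card
    (fun d : ℕ => a ^ (r - d) * ∏ i ∈ Finset.range d, (b + (r - d : ℕ) + i))
    (x := (Finset.univ : Finset (Fin r)))
  rw [Finset.powerset_univ, Finset.card_univ, Fintype.card_fin] at h2
  refine (Finset.sum_congr rfl fun D _ => h D).trans (h2.trans ?_)
  rw [← Finset.Nat.sum_antidiagonal_swap, Finset.Nat.sum_antidiagonal_eq_sum_range_succ_mk]
  refine Finset.sum_congr rfl fun d hd => ?_
  have hd : d ≤ r := Nat.lt_succ_iff.1 (Finset.mem_range.1 hd)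
  simp [Nat.choose_symm hd]

theorem hasSum_binom (c z : ℝ) (hz : |z| < 1) :
    HasSum (fun m : ℕ => (∏ i ∈ Finset.range m, (c + i)) * z ^ m / (m.factorial : ℝ))
      (1 / (1 - z) ^ c) := by
  have h := (Real.one_div_one_sub_rpow_hasFPowerSeriesOnBall_zero c).hasSum
    (y := z) (by simpa [Metric.mem_eball, edist_dist, Real.dist_eq] using hz)
  simp only [zero_add] at h
  refine (congrArg (fun f => HasSum f _) (funext fun m => ?_)).mpr h
  rw [FormalMultilinearSeries.ofScalars_apply_eq, ← Ring.multichoose_eq]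
  have h2 := Ring.factorial_nsmul_multichoose_eq_ascPochhammer c m
  rw [Polynomial.ascPochhammer_smeval_eq_eval] at h2
  have h3 : (ascPochhammer ℝ m).eval c = ∏ i ∈ Finset.range m, (c + i) := by
    clear h2
    induction m with
    | zero => simp
    | succ m ih => rw [ascPochhammer_succ_eval, ih, Finset.prod_range_succ]
  rw [← h3, ← h2]
  have : (m.factorial : ℝ) ≠ 0 := by positivity
  simp only [nsmul_eq_mul, smul_eq_mul]
  field_simp

theorem hasSum_row (a b z : ℝ) (hz : |z| < 1) (s : ℕ) :
    HasSum (fun m : ℕ => (a * z) ^ s / (s.factorial : ℝ) *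
      ((∏ i ∈ Finset.range m, (b + s + i)) * z ^ m / (m.factorial : ℝ)))
      ((a * z / (1 - z)) ^ s / (s.factorial : ℝ) * (1 / (1 - z) ^ b)) := by
  have h := (hasSum_binom (b + s) z hz).mul_left ((a * z) ^ s / (s.factorial : ℝ))
  have hz1 : 0 < 1 - z := by linarith [(abs_lt.1 hz).2]
  refine (congrArg (HasSum _) ?_).mpr h
  rw [Real.rpow_add hz1, Real.rpow_natCast]
  have := Real.rpow_pos_of_pos hz1 b
  rw [div_pow]
  field_simp

theorem hasSum_col (a b z : ℝ) :
    HasSum (fun s : ℕ => (a * z / (1 - z)) ^ s / (s.factorial : ℝ) * (1 / (1 - z) ^ b))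
      (Real.exp (a * z / (1 - z)) / (1 - z) ^ b) := by
  have := (NormedSpace.expSeries_div_hasSum_exp (a * z / (1 - z))).mul_right (1 / (1 - z) ^ b)
  rw [← Real.exp_eq_exp_ℝ] at this
  simpa [div_eq_mul_inv] using this

theorem summable_double (a b z : ℝ) (hz : |z| < 1) :
    Summable (fun p : ℕ × ℕ => (a * z) ^ p.1 / (p.1.factorial : ℝ) *
      ((∏ i ∈ Finset.range p.2, (b + p.1 + i)) * z ^ p.2 / (p.2.factorial : ℝ))) := by
  have hz' : |(|z|)| < 1 := by rwa [abs_abs]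
  have hS : Summable (fun p : ℕ × ℕ => (|a| * |z|) ^ p.1 / (p.1.factorial : ℝ) *
      ((∏ i ∈ Finset.range p.2, (|b| + p.1 + i)) * |z| ^ p.2 / (p.2.factorial : ℝ))) := by
    rw [summable_prod_of_nonneg (fun p => by simp only [Pi.zero_apply]; positivity)]
    refine ⟨fun s => (hasSum_row |a| |b| |z| hz' s).summable, ?_⟩
    have := (hasSum_col |a| |b| |z|).summable
    refine this.congr fun s => ?_
    exact ((hasSum_row |a| |b| |z| hz' s).tsum_eq).symm
  refine Summable.of_norm_bounded hS fun p => ?_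
  simp only [norm_mul, norm_div, norm_pow, Real.norm_eq_abs, Nat.abs_cast, Finset.abs_prod]
  gcongr with i hi
  calc |b + p.1 + i| ≤ |b + p.1| + |(i : ℝ)| := abs_add_le _ _
    _ ≤ |b| + |(p.1 : ℝ)| + |(i : ℝ)| := by gcongr; exact abs_add_le _ _
    _ = _ := by simp

/-- Exponential generating function for `p_r(α,β)`:
`Σ_{r≥0} p_r(α,β) z^r / r! = exp(αz/(1-z)) / (1-z)^β`. -/
theorem pPoly_egf (a b : ℝ) :
    ∀ z : ℝ, |z| < 1 →
      ∑' r : ℕ, pPoly r a b * z ^ r / (r.factorial : ℝ)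
        = Real.exp (a * z / (1 - z)) / (1 - z) ^ b := by
  intro z hz
  have hS := summable_double a b z hz
  have h1 := hS.hasSum.prod_fiberwise (fun s => hasSum_row a b z hz s)
  have h2 := h1.unique (hasSum_col a b z)
  have h3 := ((Finset.HasAntidiagonal.sigmaAntidiagonalEquivProd.summable_iff).2 hS).tsum_sigma'
    (fun n => (hasSum_fintype _).summable)
  rw [← h2, ← Finset.HasAntidiagonal.sigmaAntidiagonalEquivProd.tsum_eq]
  refine Eq.trans ?_ h3.symm
  refine tsum_congr fun r => ?_
  rw [tsum_fintype, pPoly_eq, Finset.sum_mul, Finset.sum_div, ← Finset.sum_coe_sort]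
  refine Finset.sum_congr rfl ?_
  rintro ⟨⟨s, m⟩, hp⟩ _
  have hp' : s + m = r := Finset.HasAntidiagonal.mem_antidiagonal.1 hp
  subst hp'
  simp only [Function.comp_apply, Finset.HasAntidiagonal.sigmaAntidiagonalEquivProd_apply]
  rw [Nat.cast_add_choose, mul_pow, pow_add]
  have h1 : ((s + m).factorial : ℝ) ≠ 0 := by positivity
  field_simp
end
end
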